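/- For every t ≥ 2, setting N := t + 5, there exists a projection substitution θ : (Fin N × Fin N) → MvPolynomial (Fin t × Fin t) ℂ such that MvPolynomial.aeval θ Q_N = HC_t, where Q_N and HC_t are taken over the complex numbers. In other words, over ℂ the Hamiltonian cycle polynomial HC_t is a projection of Q_{t+5}. -/

import Mathlib

open scoped BigOperators

open Classical in
/-- The set of all `n`-cycles in `Equiv.Perm (Fin n)`. -/
noncomputable def nCycles (n : ℕ) : Finset (Equiv.Perm (Fin n)) :=
  Finset.univ.filter fun π => π.IsCycle ∧ π.support = Finset.univ

/-- The Hamiltonian cycle polynomial `HC_n`. -/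
noncomputable def HC (R : Type*) [CommRing R] (n : ℕ) : MvPolynomial (Fin n × Fin n) R :=
  ∑ π ∈ nCycles n, ∏ i : Fin n, MvPolynomial.X (i, π i)

/-- `HC_n^{(2)}`, with every variable squared. -/
noncomputable def HC2 (R : Type*) [CommRing R] (n : ℕ) : MvPolynomial (Fin n × Fin n) R :=
  ∑ π ∈ nCycles n, ∏ i : Fin n, (MvPolynomial.X (i, π i)) ^ 2

/-- `Q_n := HC_n + HC_n^{(2)}`. -/
noncomputable def Q (R : Type*) [CommRing R] (n : ℕ) : MvPolynomial (Fin n × Fin n) R :=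
  HC R n + HC2 R n

/-- A projection substitution sends each variable to a variable or a constant. -/
def IsProjection {σ τ F : Type*} [CommSemiring F] (θ : σ → MvPolynomial τ F) : Prop :=
  ∀ v : σ, (∃ k : τ, θ v = MvPolynomial.X k) ∨ (∃ c : F, θ v = MvPolynomial.C c)


section HamHelpers

open Equiv

/-- A permutation is full if it has no proper nonempty invariant set. -/
def FullPerm {V : Type*} (π : Equiv.Perm V) : Prop :=
  ∀ S : Set V, S.Nonempty → (∀ x ∈ S, π x ∈ S) → S = Set.univ

lemma fullPerm_iff {V : Type*} [Fintype V] [DecidableEq V] [Nontrivial V] (π : Equiv.Perm V) :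
    FullPerm π ↔ π.IsCycle ∧ π.support = Finset.univ := by
  constructor
  · intro h
    have hne : ∀ x, π x ≠ x := by
      intro x hx
      have := h {x} ⟨x, rfl⟩ (by simp [hx])
      obtain ⟨y, hy⟩ := exists_ne x
      have hy2 : y ∈ ({x} : Set V) := by rw [this]; trivial
      exact hy (by simpa using hy2)
    refine ⟨?_, by ext x; simp [hne]⟩
    obtain ⟨x, -⟩ := exists_pair_ne V
    refine ⟨x, hne x, fun y _ => ?_⟩
    have := h {y | π.SameCycle x y} ⟨x, Equiv.Perm.SameCycle.refl _ _⟩ (by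
      intro y hy
      simpa using hy)
    have hy2 : y ∈ {y | π.SameCycle x y} := by rw [this]; trivial
    exact hy2
  · rintro ⟨hc, hs⟩ S ⟨x, hx⟩ hS
    have hne : ∀ x, π x ≠ x := fun x => by
      have : x ∈ π.support := by rw [hs]; simp
      simpa using this
    ext y
    simp only [Set.mem_univ, iff_true]
    obtain ⟨k, rfl⟩ := hc.exists_pow_eq (hne x) (hne y)
    clear hs
    induction k with
    | zero => simpa using hx
    | succ k ih => rw [pow_succ']; exact hS _ ih

open Classical in
/-- Hamiltonian cycle sum of a weight matrix. -/
noncomputable def hcf {V R : Type*} [Fintype V] [DecidableEq V] [CommRing R] (M : V → V → R) : R :=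
  ∑ π : Equiv.Perm V, if FullPerm π then ∏ v, M v (π v) else 0

lemma fullPerm_permCongr {V W : Type*} (e : V ≃ W) (π : Equiv.Perm V) (h : FullPerm π) :
    FullPerm (e.permCongr π) := by
  intro S hS hc
  have := h (e ⁻¹' S) (by obtain ⟨y, hy⟩ := hS; exact ⟨e.symm y, by simpa using hy⟩)
    (fun x hx => by simpa using hc (e x) hx)
  ext y
  have h2 : e.symm y ∈ e ⁻¹' S := by rw [this]; trivial
  simpa using h2

lemma hcf_reindex {V W R : Type*} [Fintype V] [DecidableEq V] [Fintype W] [DecidableEq W] [CommRing R] (e : V ≃ W)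
    (M : W → W → R) : hcf (fun v w => M (e v) (e w)) = hcf M := by
  classical
  unfold hcf
  refine Fintype.sum_equiv e.permCongr _ _ fun π => ?_
  have : FullPerm (e.permCongr π) ↔ FullPerm π := by
    refine ⟨fun h => ?_, fullPerm_permCongr e π⟩
    have := fullPerm_permCongr e.symm _ h
    convert this using 1
    ext x; simp
  simp only [this]
  congr 1
  exact Fintype.prod_equiv e _ _ fun v => by simp

lemma not_full_none {V : Type*} [Nonempty V] (π : Equiv.Perm (Option V)) (h : π none = none) :
    ¬ FullPerm π := by
  intro hf
  have := hf {none} ⟨none, rfl⟩ (by simp [h])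
  obtain ⟨v⟩ := ‹Nonempty V›
  have h2 : some v ∈ ({none} : Set (Option V)) := by rw [this]; trivial
  simp at h2

/-- Insert `none` after `u`. -/
def insPerm {V : Type*} [DecidableEq V] (σ : Equiv.Perm V) (u : V) : Equiv.Perm (Option V) :=
  Equiv.Perm.decomposeOption.symm (some (σ u), σ)

lemma insPerm_none {V : Type*} [DecidableEq V] (σ : Equiv.Perm V) (u : V) :
    insPerm σ u none = some (σ u) := by
  simp [insPerm]

lemma insPerm_self {V : Type*} [DecidableEq V] (σ : Equiv.Perm V) (u : V) :
    insPerm σ u (some u) = none := by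
  simp [insPerm]

lemma insPerm_ne {V : Type*} [DecidableEq V] (σ : Equiv.Perm V) (u v : V) (h : v ≠ u) :
    insPerm σ u (some v) = some (σ v) := by
  simp only [insPerm, Equiv.Perm.decomposeOption, Equiv.coe_fn_symm_mk, Equiv.Perm.coe_mul,
    Function.comp_apply, Equiv.optionCongr_apply, Option.map_some]
  exact Equiv.swap_apply_of_ne_of_ne (by simp) (by simpa using h)

lemma full_insPerm {V : Type*} [DecidableEq V] (σ : Equiv.Perm V) (u : V) :
    FullPerm (insPerm σ u) ↔ FullPerm σ := by
  constructor
  · intro h T hT hc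
    have := h {o | ∀ v, o = some v ∨ (o = none ∧ v = u) → v ∈ T}
      (by obtain ⟨v, hv⟩ := hT; exact ⟨some v, by simpa using hv⟩) (by
        rintro (_ | v) hx
        · rw [insPerm_none]
          have : u ∈ T := hx u (by simp)
          simpa using hc u this
        · have hv : v ∈ T := hx v (by simp)
          by_cases hu : v = u
          · subst hu; rw [insPerm_self]; simpa using hv
          · rw [insPerm_ne _ _ _ hu]; simpa using hc v hv)
    ext v
    have h2 : some v ∈ {o | ∀ v, o = some v ∨ (o = none ∧ v = u) → v ∈ T} := by
      rw [this]; trivial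
    simpa using h2
  · intro h S hS hc
    have key := h {v | some v ∈ S} (by
      obtain ⟨o, ho⟩ := hS
      rcases o with _ | v
      · have := hc _ ho
        rw [insPerm_none] at this
        exact ⟨_, this⟩
      · exact ⟨v, ho⟩) (by
        intro v hv
        have h1 := hc _ hv
        by_cases hu : v = u
        · subst hu
          rw [insPerm_self] at h1
          have := hc _ h1
          rwa [insPerm_none] at this
        · rwa [insPerm_ne _ _ _ hu] at h1)
    have all : ∀ v, some v ∈ S := fun v => by
      have : v ∈ {v | some v ∈ S} := by rw [key]; trivial
      exact this
    ext o
    rcases o with _ | v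
    · have := hc _ (all u)
      rw [insPerm_self] at this
      simpa using this
    · simpa using all v

open Classical in
lemma hcf_option {V R : Type*} [Fintype V] [DecidableEq V] [Nonempty V] [CommRing R]
    (M : Option V → Option V → R) :
    hcf M = ∑ σ : Equiv.Perm V, if FullPerm σ then
      ∑ u, M (some u) none * M none (some (σ u)) *
        ∏ v ∈ Finset.univ.erase u, M (some v) (some (σ v)) else 0 := by
  unfold hcf
  rw [← Equiv.sum_comp Equiv.Perm.decomposeOption.symm, Fintype.sum_prod_type_right]
  refine Finset.sum_congr rfl fun σ _ => ?_
  rw [Fintype.sum_option, if_neg (not_full_none _ (by simp)), zero_add,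
    ← Equiv.sum_comp σ]
  change (∑ u, if FullPerm (insPerm σ u) then ∏ v, M v (insPerm σ u v) else 0) = _
  simp only [full_insPerm]
  split_ifs
  · refine Finset.sum_congr rfl fun u _ => ?_
    rw [Fintype.prod_option, insPerm_none, ← Finset.mul_prod_erase _ _ (Finset.mem_univ u),
      insPerm_self]
    rw [Finset.prod_congr rfl fun v hv => by rw [insPerm_ne σ u v (Finset.ne_of_mem_erase hv)]]
    ring
  · simp

open Classical in
/-- Split the vertex `u`. -/
noncomputable def splitM {V R : Type*} [CommRing R] (M : V → V → R) (u : V) :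
    Option V → Option V → R
  | some w, none => if w = u then 1 else 0
  | some w, some v => if w = u then 0 else M w v
  | none, some v => M u v
  | none, none => 0

lemma hcf_splitM {V R : Type*} [Fintype V] [DecidableEq V] [CommRing R] (M : V → V → R) (u : V) :
    hcf (splitM M u) = hcf M := by
  classical
  have : Nonempty V := ⟨u⟩
  rw [hcf_option, hcf]
  refine Finset.sum_congr rfl fun σ _ => ?_
  congr 1
  rw [Finset.sum_eq_single u]
  · rw [← Finset.mul_prod_erase _ _ (Finset.mem_univ u)]
    simp only [splitM, if_true, one_mul]
    congr 1
    exact Finset.prod_congr rfl fun v hv => if_neg (Finset.ne_of_mem_erase hv)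
  · intro w _ hw
    simp [splitM, hw]
  · simp

lemma splitM_sq {V R : Type*} [CommRing R] (M : V → V → R) (u : V) :
    (fun v w => splitM M u v w ^ 2) = splitM (fun v w => M v w ^ 2) u := by
  ext v w
  rcases v with _ | v <;> rcases w with _ | w <;> simp [splitM]

open Classical in
/-- The two-path gadget. -/
noncomputable def gadM {V R : Type*} [CommRing R] (B : V → V → R) (s x y : V) (a b : R) :
    Option V → Option V → R
  | some w, some v => if w = s then (if v = x then a else 0) else B w v
  | some w, none => if w = s then b else if w = x then 1 else 0
  | none, some v => if v = x ∨ v = y then 1 else 0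
  | none, none => 0

lemma gadM_sq {V R : Type*} [CommRing R] (B : V → V → R) (s x y : V) (a b : R) :
    (fun v w => gadM B s x y a b v w ^ 2) =
      gadM (fun v w => B v w ^ 2) s x y (a ^ 2) (b ^ 2) := by
  ext v w
  rcases v with _ | v <;> rcases w with _ | w <;> simp only [gadM] <;> (try split_ifs) <;> simp

open Classical in
lemma hcf_gadM {V R : Type*} [Fintype V] [DecidableEq V] [CommRing R] (B : V → V → R) (s x y : V) (a b : R)
    (hsx : s ≠ x) (hs : ∀ v, B s v = if v = x then 1 else 0)
    (hx : ∀ v, B x v = if v = y then 1 else 0) :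
    hcf (gadM B s x y a b) = (a + b) * hcf B := by
  have : Nonempty V := ⟨s⟩
  rw [hcf_option, hcf, Finset.mul_sum]
  refine Finset.sum_congr rfl fun σ _ => ?_
  rw [mul_ite, mul_zero]
  congr 1
  have hxs : x ∈ Finset.univ.erase s := by simp [hsx.symm]
  have hsx' : s ∈ Finset.univ.erase x := by simp [hsx]
  rw [← Finset.add_sum_erase _ _ (Finset.mem_univ s), ← Finset.add_sum_erase _ _ hxs,
    Finset.sum_eq_zero, ← Finset.mul_prod_erase _ _ (Finset.mem_univ s),
    ← Finset.mul_prod_erase _ _ hxs, ← Finset.mul_prod_erase _ _ hxs,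
    ← Finset.mul_prod_erase _ _ hsx', Finset.erase_right_comm (a := x) (b := s)]
  · have hP : ∏ v ∈ (Finset.univ.erase s).erase x, gadM B s x y a b (some v) (some (σ v)) =
        ∏ v ∈ (Finset.univ.erase s).erase x, B v (σ v) := by
      refine Finset.prod_congr rfl fun v hv => ?_
      have : v ≠ s := by
        simp only [Finset.mem_erase] at hv; exact hv.2.1
      simp [gadM, this]
    rw [hP]
    have hinj : σ s ≠ σ x := fun h => hsx (σ.injective h)
    simp only [gadM, hs, hx, if_true, if_neg hsx.symm]
    by_cases h1 : σ s = x <;> by_cases h2 : σ x = y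
    · simp [h1, h2]; ring
    · have : σ x ≠ x := fun h => hinj (h1.trans h.symm)
      simp [h1, h2, this]
    · have : σ s ≠ y := fun h => hinj (h.trans h2.symm)
      simp [h1, h2, this]
    · simp [h1, h2]
  · intro w hw
    simp only [Finset.mem_erase] at hw
    simp [gadM, hw.1, hw.2.1]

/-- Value is a variable or a constant. -/
def VarOrConst {τ F : Type*} [CommSemiring F] (p : MvPolynomial τ F) : Prop :=
  (∃ k : τ, p = MvPolynomial.X k) ∨ (∃ c : F, p = MvPolynomial.C c)

lemma voc_zero {τ F : Type*} [CommSemiring F] : VarOrConst (0 : MvPolynomial τ F) :=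
  Or.inr ⟨0, by simp⟩

lemma voc_one {τ F : Type*} [CommSemiring F] : VarOrConst (1 : MvPolynomial τ F) :=
  Or.inr ⟨1, by simp⟩

lemma voc_splitM {V τ F : Type*} [CommRing F] (M : V → V → MvPolynomial τ F) (u : V)
    (h : ∀ v w, VarOrConst (M v w)) (v w : Option V) : VarOrConst (splitM M u v w) := by
  rcases v with _ | v <;> rcases w with _ | w <;> simp only [splitM] <;> (try split_ifs) <;>
    first | exact voc_zero | exact voc_one | exact h _ _

lemma voc_gadM {V τ F : Type*} [CommRing F] (M : V → V → MvPolynomial τ F) (s x y : V)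
    (a b : MvPolynomial τ F) (ha : VarOrConst a) (hb : VarOrConst b)
    (h : ∀ v w, VarOrConst (M v w)) (v w : Option V) : VarOrConst (gadM M s x y a b v w) := by
  rcases v with _ | v <;> rcases w with _ | w <;> simp only [gadM] <;> (try split_ifs) <;>
    first | exact voc_zero | exact voc_one | exact ha | exact hb | exact h _ _

/-- The double split followed by the gadget. -/
noncomputable def bigM {V R : Type*} [CommRing R] (M : V → V → R) (u : V) (a b : R) :
    Option (Option (Option V)) → Option (Option (Option V)) → R :=
  gadM (splitM (splitM M u) none) (some (some u)) (some none) none a b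

lemma hcf_bigM {V R : Type*} [Fintype V] [DecidableEq V] [CommRing R] (M : V → V → R) (u : V) (a b : R) :
    hcf (bigM M u a b) = (a + b) * hcf M := by
  classical
  rw [bigM, hcf_gadM, hcf_splitM, hcf_splitM]
  · simp
  · rintro (_ | _ | v) <;> simp [splitM]
  · rintro (_ | v) <;> simp [splitM]

lemma bigM_sq {V R : Type*} [CommRing R] (M : V → V → R) (u : V) (a b : R) :
    (fun v w => bigM M u a b v w ^ 2) = bigM (fun v w => M v w ^ 2) u (a ^ 2) (b ^ 2) := by
  unfold bigM
  rw [gadM_sq, splitM_sq, splitM_sq]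

lemma sum_nCycles {R : Type*} [CommRing R] (n : ℕ) (hn : 2 ≤ n) (M : Fin n → Fin n → R) :
    ∑ π ∈ nCycles n, ∏ i, M i (π i) = hcf M := by
  classical
  have : Nontrivial (Fin n) := Fin.nontrivial_iff_two_le.mpr hn
  rw [nCycles, hcf, Finset.sum_filter]
  refine Finset.sum_congr rfl fun π _ => ?_
  simp only [fullPerm_iff]

end HamHelpers

/-- Over `ℂ`, the Hamiltonian cycle polynomial `HC_t` is a projection of `Q_{t+5}`. -/
theorem stmt14 (t : ℕ) (ht : 2 ≤ t) :
    ∃ θ : Fin (t + 5) × Fin (t + 5) → MvPolynomial (Fin t × Fin t) ℂ,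
      IsProjection θ ∧ MvPolynomial.aeval θ (Q ℂ (t + 5)) = HC ℂ t := by
  let A : Fin t → Fin t → MvPolynomial (Fin t × Fin t) ℂ := fun i j => MvPolynomial.X (i, j)
  let u : Fin t := ⟨0, by omega⟩
  let a : ℂ := (1 + Complex.I) / 2
  let b : ℂ := (1 - Complex.I) / 2
  have hab : a + b = 1 := by simp only [a, b]; ring
  have hab2 : a ^ 2 + b ^ 2 = 0 := by
    simp only [a, b]; ring_nf; simp
  let A2 := splitM (splitM A u) none
  let B := bigM A2 none (MvPolynomial.C a) (MvPolynomial.C b)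
  have hB : ∀ v w, VarOrConst (B v w) := by
    refine voc_gadM _ _ _ _ _ _ (Or.inr ⟨a, rfl⟩) (Or.inr ⟨b, rfl⟩) ?_
    refine voc_splitM _ _ (voc_splitM _ _ (voc_splitM _ _ (voc_splitM _ _ ?_)))
    exact fun v w => Or.inl ⟨(v, w), rfl⟩
  have e : Fin (t + 5) ≃ Option (Option (Option (Option (Option (Fin t))))) :=
    Fintype.equivOfCardEq (by simp)
  refine ⟨fun p => B (e p.1) (e p.2), fun p => hB _ _, ?_⟩
  have h1 : hcf B = hcf A := by
    simp only [B, A2, hcf_bigM, hcf_splitM]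
    rw [← map_add, hab]; simp
  have h2 : hcf (fun v w => B v w ^ 2) = 0 := by
    simp only [B]
    rw [bigM_sq, hcf_bigM, ← map_pow, ← map_pow, ← map_add, hab2]; simp
  simp only [Q, HC, HC2, map_add, map_sum, map_prod, map_pow, MvPolynomial.aeval_X]
  rw [sum_nCycles (t + 5) (by omega) (fun i j => B (e i) (e j)),
    sum_nCycles (t + 5) (by omega) (fun i j => B (e i) (e j) ^ 2),
    sum_nCycles t ht A, hcf_reindex e B, hcf_reindex e (fun v w => B v w ^ 2), h1, h2, add_zero]
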